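/- Let −1 ≤ B < A ≤ 1 and let f be analytic on 𝔻 with f(0) = 0, f'(0) = 1, f(z) ≠ 0 on 𝔻 \ {0}, and z f'(z)/f(z) ∈ {(1 + Aw)/(1 + Bw) : w ∈ 𝔻} for every z ∈ 𝔻 \ {0} (i.e. f ∈ S*[A,B]). Define R₁ = 1/√(B(3B − 2A)), R₂ = min{1, 1/(2A − B)} and R₃ = min{1, 3/(2A − 5B)}, and set ρ = R₂ if B ≥ 0; if B < 0, set ρ = R₂ when R₂ ≤ R₁ and ρ = R₃ when R₂ > R₁. Then z f'(z)/f(z) ∈ Ω_car for every z with 0 < |z| < ρ. -/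

import Mathlib

open Complex Metric

def omegaCar : Set ℂ := {w : ℂ | ∃ u : ℂ, ‖u‖ < 1 ∧ w = 1 + u + u ^ 2 / 2}

def SCar (f : ℂ → ℂ) : Prop :=
  DifferentiableOn ℂ f (Metric.ball (0 : ℂ) 1) ∧ f 0 = 0 ∧ deriv f 0 = 1 ∧
    (∀ z : ℂ, ‖z‖ < 1 → z ≠ 0 → f z ≠ 0) ∧
    (∀ z : ℂ, ‖z‖ < 1 → z ≠ 0 → z * deriv f z / f z ∈ omegaCar)

lemma car_of_disc (P : ℂ) (h : ‖P - 3 / 2‖ < 1) : P ∈ omegaCar := by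
  obtain ⟨v, hv, hx⟩ : ∃ v : ℂ, v ^ 2 = 2 * P - 1 ∧ 0 ≤ v.re := by
    obtain ⟨v, hv'⟩ := IsAlgClosed.exists_pow_nat_eq (2 * P - 1) two_pos
    have hv := hv'.symm
    rcases le_total 0 v.re with h0 | h0
    · exact ⟨v, hv.symm, h0⟩
    · exact ⟨-v, by rw [hv]; ring, by simpa using h0⟩
  refine ⟨v - 1, ?_, by linear_combination (-1 / 2 : ℂ) * hv⟩
  have hP : P - 3 / 2 = (v ^ 2 - 2) / 2 := by linear_combination (-1 / 2 : ℂ) * hv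
  have h2 : ‖v ^ 2 - 2‖ < 2 := by
    rw [hP, norm_div] at h
    norm_num at h
    linarith
  have h3 : ‖v ^ 2 - 2‖ ^ 2 < 4 := by nlinarith [norm_nonneg (v ^ 2 - 2)]
  rw [Complex.sq_norm, Complex.normSq_apply] at h3
  have h4 : ‖v - 1‖ ^ 2 < 1 := by
    rw [Complex.sq_norm, Complex.normSq_apply]
    simp [pow_two] at h3 ⊢
    set x := v.re
    set y := v.im
    have k1 : (x ^ 2 + y ^ 2) ^ 2 < 4 * (x ^ 2 - y ^ 2) := by nlinarith
    have k2 : (x ^ 2 + y ^ 2) ^ 2 < (2 * x) ^ 2 := by nlinarith [sq_nonneg y]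
    have k3 := lt_of_pow_lt_pow_left₀ 2 (by linarith) k2
    nlinarith
  nlinarith [norm_nonneg (v - 1)]

lemma janowski_disc (A B : ℝ) (hB : -1 ≤ B) (hBA : B < A) (hA : A ≤ 1) (w : ℂ) (hw : ‖w‖ < 1)
    (h1 : (2 * A - B) * ‖w‖ < 1) (h2 : (2 * A - 5 * B) * ‖w‖ < 3)
    (hne : 1 + (B : ℂ) * w ≠ 0) :
    ‖(1 + (A : ℂ) * w) / (1 + (B : ℂ) * w) - 3 / 2‖ < 1 := by
  have e : (1 + (A : ℂ) * w) / (1 + (B : ℂ) * w) - 3 / 2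
      = (-1 + (2 * A - 3 * B) * w) / (2 * (1 + B * w)) := by
    rw [div_sub_div _ _ hne two_ne_zero, div_eq_div_iff (mul_ne_zero hne two_ne_zero)
      (mul_ne_zero two_ne_zero hne)]
    ring
  have hpos : 0 < ‖2 * (1 + (B : ℂ) * w)‖ := by
    rw [norm_pos_iff]
    exact mul_ne_zero two_ne_zero hne
  rw [e, norm_div, div_lt_one hpos]
  apply lt_of_pow_lt_pow_left₀ 2 hpos.le
  have hs : ‖w‖ ^ 2 = w.re * w.re + w.im * w.im := by rw [Complex.sq_norm, Complex.normSq_apply]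
  have ht := norm_nonneg w
  have hx := abs_le.1 (Complex.abs_re_le_norm w)
  rw [Complex.sq_norm, Complex.sq_norm, Complex.normSq_apply, Complex.normSq_apply]
  simp
  set x := w.re
  set y := w.im
  set t := ‖w‖
  have f1 : 0 < (1 - (2 * A - B) * t) * (3 + (2 * A - 5 * B) * t) :=
    mul_pos (by linarith) (by nlinarith)
  have f2 : 0 < (1 + (2 * A - B) * t) * (3 - (2 * A - 5 * B) * t) :=
    mul_pos (by nlinarith) (by linarith)
  have key : 0 < 3 + (4 * A + 2 * B) * x - (2 * A - 5 * B) * (2 * A - B) * t ^ 2 := by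
    rcases le_total 0 (4 * A + 2 * B) with h | h
    · nlinarith [mul_nonneg h (by linarith : 0 ≤ x + t)]
    · nlinarith [mul_nonneg (neg_nonneg.2 h) (by linarith : 0 ≤ t - x)]
  rw [hs] at key
  nlinarith

lemma radius_bounds (A B : ℝ) (hB : -1 ≤ B) (hBA : B < A) (hA : A ≤ 1) (R₁ R₂ R₃ ρ : ℝ)
    (hR₁ : R₁ = 1 / Real.sqrt (B * (3 * B - 2 * A)))
    (hR₂ : R₂ = min 1 (1 / (2 * A - B)))
    (hR₃ : R₃ = min 1 (3 / (2 * A - 5 * B)))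
    (hρ : ρ = if 0 ≤ B then R₂ else if R₂ ≤ R₁ then R₂ else R₃)
    (r : ℝ) (hr0 : 0 < r) (hr : r < ρ) :
    r < 1 ∧ (2 * A - B) * r < 1 ∧ (2 * A - 5 * B) * r < 3 := by
  have l2 : r < R₂ → r < 1 ∧ (2 * A - B) * r < 1 := by
    intro h
    rw [hR₂, lt_min_iff] at h
    refine ⟨h.1, ?_⟩
    have hp : 0 < 2 * A - B := one_div_pos.1 (hr0.trans h.2)
    have := (lt_div_iff₀ hp).1 h.2
    linarith
  have id1 : (3 - (2 * A - 5 * B) * r) * (1 - B * r) =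
      2 * (1 - B * (3 * B - 2 * A) * r ^ 2) + (1 - (2 * A - B) * r) * (1 + B * r) := by ring
  by_cases h0 : 0 ≤ B
  · rw [if_pos h0] at hρ
    obtain ⟨a, b⟩ := l2 (hρ ▸ hr)
    exact ⟨a, b, by nlinarith⟩
  rw [if_neg h0] at hρ
  push Not at h0
  have hD : 0 < B * (3 * B - 2 * A) := mul_pos_of_neg_of_neg h0 (by linarith)
  have hS : 0 < Real.sqrt (B * (3 * B - 2 * A)) := Real.sqrt_pos.2 hD
  have hSS := Real.sq_sqrt hD.le
  have case1 : r ≤ R₁ → r < R₂ → r < 1 ∧ (2 * A - B) * r < 1 ∧ (2 * A - 5 * B) * r < 3 := by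
    intro g1 g2
    obtain ⟨a, b⟩ := l2 g2
    refine ⟨a, b, ?_⟩
    rw [hR₁, le_div_iff₀ hS] at g1
    have g3 : B * (3 * B - 2 * A) * r ^ 2 ≤ 1 := by
      rw [← hSS, ← mul_pow]
      exact pow_le_one₀ (by positivity) (by linarith)
    have g4 : 0 < (1 - (2 * A - B) * r) * (1 + B * r) := mul_pos (by linarith) (by nlinarith)
    have g5 : 0 < 1 - B * r := by nlinarith
    have := (pos_iff_pos_of_mul_pos (a := 3 - (2 * A - 5 * B) * r) (b := 1 - B * r)
      (by linarith)).2 g5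
    linarith
  by_cases h12 : R₂ ≤ R₁
  · rw [if_pos h12] at hρ
    exact case1 (by linarith) (by linarith)
  rw [if_neg h12] at hρ
  push Not at h12
  rcases le_or_gt r R₁ with g | g
  · exact case1 g (by linarith)
  rw [hρ, hR₃, lt_min_iff] at hr
  have b := (lt_div_iff₀ (by linarith : 0 < 2 * A - 5 * B)).1 hr.2
  refine ⟨hr.1, ?_, by linarith⟩
  rw [hR₁, div_lt_iff₀ hS] at g
  have g3 : 1 ≤ B * (3 * B - 2 * A) * r ^ 2 := by
    rw [← hSS, ← mul_pow]
    exact one_le_pow₀ (by linarith)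
  have g4 : 0 < (3 - (2 * A - 5 * B) * r) * (1 - B * r) := mul_pos (by linarith) (by nlinarith)
  have g5 : 0 < 1 + B * r := by nlinarith [hr.1]
  have := (pos_iff_pos_of_mul_pos (a := 1 - (2 * A - B) * r) (b := 1 + B * r)
      (by linarith)).2 g5
  linarith

lemma one_add_ne (B : ℝ) (hB : -1 ≤ B) (hB1 : B ≤ 1) (w : ℂ) (hw : ‖w‖ < 1) :
    1 + (B : ℂ) * w ≠ 0 := by
  intro h
  have h1 : (B : ℂ) * w = -1 := by linear_combination h
  have h2 : |B| * ‖w‖ = 1 := by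
    have := congrArg norm h1
    simpa using this
  have := abs_le.2 ⟨hB, hB1⟩
  nlinarith [norm_nonneg w]

lemma schwarz_step (A B : ℝ) (hB : -1 ≤ B) (hBA : B < A) (hA : A ≤ 1)
    (f : ℂ → ℂ)
    (hfd : DifferentiableOn ℂ f (Metric.ball (0 : ℂ) 1))
    (hf0 : f 0 = 0) (hf1 : deriv f 0 = 1)
    (hfne : ∀ z : ℂ, ‖z‖ < 1 → z ≠ 0 → f z ≠ 0)
    (hsub : ∀ z : ℂ, ‖z‖ < 1 → z ≠ 0 → ∃ w : ℂ, ‖w‖ < 1 ∧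
      z * deriv f z / f z = (1 + (A : ℂ) * w) / (1 + (B : ℂ) * w))
    (z : ℂ) (hz : ‖z‖ < 1) (hz0 : z ≠ 0) : ∃ w : ℂ, ‖w‖ ≤ ‖z‖ ∧
      z * deriv f z / f z = (1 + (A : ℂ) * w) / (1 + (B : ℂ) * w) := by
  have hAB : (A : ℂ) - B ≠ 0 := by
    rw [← Complex.ofReal_sub, Complex.ofReal_ne_zero]
    linarith
  set g := dslope f 0 with hg
  have hnhds : Metric.ball (0 : ℂ) 1 ∈ nhds (0 : ℂ) := Metric.ball_mem_nhds _ one_pos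
  have hgd : DifferentiableOn ℂ g (Metric.ball (0 : ℂ) 1) :=
    (Complex.differentiableOn_dslope hnhds).2 hfd
  have hf'd : DifferentiableOn ℂ (deriv f) (Metric.ball (0 : ℂ) 1) :=
    hfd.deriv Metric.isOpen_ball
  have hg0 : g 0 = 1 := by rw [hg, dslope_same, hf1]
  have hgz : ∀ z : ℂ, z ≠ 0 → f z = z * g z := by
    intro z hz
    rw [hg, dslope_of_ne _ hz, slope_def_field, hf0]
    field_simp
    simp [mul_comm]
  let om : ℂ → ℂ := fun z => (deriv f z - g z) / (A * g z - B * deriv f z)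
  have hom0 : om 0 = 0 := by simp [om, hg0, hf1]
  have main : ∀ z : ℂ, ‖z‖ < 1 → z ≠ 0 → (A * g z - B * deriv f z ≠ 0) ∧ ‖om z‖ < 1 ∧
      z * deriv f z / f z = (1 + (A : ℂ) * om z) / (1 + (B : ℂ) * om z) := by
    intro z hz hz0
    obtain ⟨w, hw, h⟩ := hsub z hz hz0
    have hn := one_add_ne B hB (by linarith) w hw
    have hgne : g z ≠ 0 := by
      intro h0
      apply hfne z hz hz0
      rw [hgz z hz0, h0, mul_zero]
    have hd : deriv f z = g z * ((1 + (A : ℂ) * w) / (1 + (B : ℂ) * w)) := by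
      rw [← h, hgz z hz0]
      field_simp
    have hden : A * g z - B * deriv f z = g z * (A - B) / (1 + B * w) := by
      rw [hd]
      field_simp
      ring
    have hne : A * g z - B * deriv f z ≠ 0 := by
      rw [hden]
      exact div_ne_zero (mul_ne_zero hgne hAB) hn
    have how : om z = w := by
      simp only [om]
      have hnum : deriv f z - g z = w * (g z * (A - B) / (1 + B * w)) := by
        rw [hd]
        generalize hq : 1 + (B : ℂ) * w = q at hn
        field_simp
        rw [← hq]
        ring
      rw [hden, hnum]
      exact mul_div_cancel_right₀ _ (hden ▸ hne)
    exact ⟨hne, by rw [how]; exact hw, by rw [how]; exact h⟩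
  have homd : DifferentiableOn ℂ om (Metric.ball (0 : ℂ) 1) := by
    apply DifferentiableOn.div (hf'd.sub hgd) ((hgd.const_mul _).sub (hf'd.const_mul _))
    intro z hz
    by_cases h0 : z = 0
    · simpa [h0, hg0, hf1] using hAB
    · exact (main z (by simpa using hz) h0).1
  have hmaps : Set.MapsTo om (Metric.ball (0 : ℂ) 1) (Metric.ball (0 : ℂ) 1) := by
    intro z hz
    by_cases h0 : z = 0
    · rw [h0, hom0]; simp
    · simpa using (main z (by simpa using hz) h0).2.1
  refine ⟨om z, ?_, (main z hz hz0).2.2⟩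
  exact Complex.norm_le_norm_of_mapsTo_ball homd (hmaps.mono_right Metric.ball_subset_closedBall) hom0 hz

theorem stmt_16 (A B : ℝ) (hB : -1 ≤ B) (hBA : B < A) (hA : A ≤ 1)
    (f : ℂ → ℂ)
    (hfd : DifferentiableOn ℂ f (Metric.ball (0 : ℂ) 1))
    (hf0 : f 0 = 0) (hf1 : deriv f 0 = 1)
    (hfne : ∀ z : ℂ, ‖z‖ < 1 → z ≠ 0 → f z ≠ 0)
    (hsub : ∀ z : ℂ, ‖z‖ < 1 → z ≠ 0 → ∃ w : ℂ, ‖w‖ < 1 ∧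
      z * deriv f z / f z = (1 + (A : ℂ) * w) / (1 + (B : ℂ) * w))
    (R₁ R₂ R₃ ρ : ℝ)
    (hR₁ : R₁ = 1 / Real.sqrt (B * (3 * B - 2 * A)))
    (hR₂ : R₂ = min 1 (1 / (2 * A - B)))
    (hR₃ : R₃ = min 1 (3 / (2 * A - 5 * B)))
    (hρ : ρ = if 0 ≤ B then R₂ else if R₂ ≤ R₁ then R₂ else R₃) :
    ∀ z : ℂ, z ≠ 0 → ‖z‖ < ρ → z * deriv f z / f z ∈ omegaCar := by
  intro z hz0 hz
  obtain ⟨h1, h2, h3⟩ := radius_bounds A B hB hBA hA R₁ R₂ R₃ ρ hR₁ hR₂ hR₃ hρ ‖z‖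
    (norm_pos_iff.2 hz0) hz
  obtain ⟨w, hw, h⟩ := schwarz_step A B hB hBA hA f hfd hf0 hf1 hfne hsub z h1 hz0
  rw [h]
  have hw1 : ‖w‖ < 1 := by linarith
  have hw0 := norm_nonneg w
  have mono : ∀ k c : ℝ, 0 < c → k * ‖z‖ < c → k * ‖w‖ < c := by
    intro k c hc hk
    rcases le_total 0 k with h | h
    · exact (mul_le_mul_of_nonneg_left hw h).trans_lt hk
    · exact (mul_nonpos_of_nonpos_of_nonneg h hw0).trans_lt hc
  exact car_of_disc _ (janowski_disc A B hB hBA hA w hw1 (mono _ _ one_pos h2)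
    (mono _ _ three_pos h3) (one_add_ne B hB (by linarith) w hw1))
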